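/- Let C ∈ Mₙ(ℂ) be a Hermitian matrix with characteristic polynomial χ_C = c₀ + c₁X + ⋯ + c_{n−1}X^{n−1} + Xⁿ. Then all cᵢ are real, and the type of C is (p,q), where p is the number of sign changes in the sequence c₀, c₁, …, c_{n−1}, 1, and q is the number of sign changes in the sequence c₀, −c₁, …, (−1)^{n−1} c_{n−1}, (−1)ⁿ. Moreover, if c₀ = ⋯ = c_{r−1} = 0 and c_r ≠ 0, then p + q = n − r. -/

import Mathlib

open Matrix

/-- The number of sign changes in a list of real numbers, counted after deleting zeros. -/
noncomputable def signChanges (l : List ℝ) : ℕ :=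
  let l' := l.filter (fun a => decide (a ≠ 0))
  (l'.zip l'.tail).countP (fun p => decide (p.1 * p.2 < 0))

/-- The type `(p, q)` of a complex Hermitian matrix, via Sylvester's law of inertia for
the Hermitian form `(x, y) ↦ xᴴ C y` on `ℂⁿ`. -/
def Matrix.IsHermTypeOf {n : ℕ} (C : Matrix (Fin n) (Fin n) ℂ) (p q : ℕ) : Prop :=
  IsGreatest {d : ℕ | ∃ W : Submodule ℂ (Fin n → ℂ), Module.finrank ℂ W = d ∧
      ∀ x ∈ W, x ≠ 0 → 0 < (star x ⬝ᵥ C.mulVec x).re} p ∧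
  IsGreatest {d : ℕ | ∃ W : Submodule ℂ (Fin n → ℂ), Module.finrank ℂ W = d ∧
      ∀ x ∈ W, x ≠ 0 → (star x ⬝ᵥ C.mulVec x).re < 0} q

lemma sv_zip_cons (a b : ℝ) (l : List ℝ) :
    ((a :: b :: l).zip (a :: b :: l).tail).countP (fun p : ℝ × ℝ => decide (p.1 * p.2 < 0)) =
    ((b :: l).zip (b :: l).tail).countP (fun p : ℝ × ℝ => decide (p.1 * p.2 < 0)) +
      if a * b < 0 then 1 else 0 := by
  simp [List.countP_cons]

lemma sv_zip_append (l : List ℝ) (a b : ℝ) :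
    ((l ++ [b, a]).zip (l ++ [b, a]).tail).countP (fun p : ℝ × ℝ => decide (p.1 * p.2 < 0)) =
    ((l ++ [b]).zip (l ++ [b]).tail).countP (fun p : ℝ × ℝ => decide (p.1 * p.2 < 0)) +
      if a * b < 0 then 1 else 0 := by
  induction l with
  | nil => simp [List.countP_cons, mul_comm]
  | cons c l ih =>
    cases l with
    | nil =>
      simp only [List.cons_append, List.nil_append, sv_zip_cons, mul_comm]
      simp [add_comm]
    | cons d l =>
      simp only [List.cons_append, sv_zip_cons] at ih ⊢
      rw [ih]; omega

lemma sv_zip_reverse (l : List ℝ) :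
    (l.reverse.zip l.reverse.tail).countP (fun p : ℝ × ℝ => decide (p.1 * p.2 < 0)) =
    (l.zip l.tail).countP (fun p : ℝ × ℝ => decide (p.1 * p.2 < 0)) := by
  induction l with
  | nil => simp
  | cons a l ih =>
    cases l with
    | nil => simp
    | cons b l =>
      rw [sv_zip_cons, ← ih]
      simp only [List.reverse_cons, List.append_assoc, List.cons_append, List.nil_append]
      rw [sv_zip_append]

lemma sv_destutter (l : List ℝ) (a : ℝ) (ha : a ≠ 0) (hl : ∀ x ∈ l, x ≠ 0) :
    ((l.map SignType.sign).destutter' (· ≠ ·) (SignType.sign a)).length =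
    ((a :: l).zip (a :: l).tail).countP (fun p : ℝ × ℝ => decide (p.1 * p.2 < 0)) + 1 := by
  induction l generalizing a with
  | nil => simp
  | cons b l ih =>
    have hb : b ≠ 0 := hl b (by simp)
    have ih' := ih b hb (fun x hx => hl x (by simp [hx]))
    rw [sv_zip_cons, List.map_cons, List.destutter'_cons]
    by_cases h : SignType.sign a = SignType.sign b
    · rw [if_neg (by simpa using h), h, ih', if_neg]
      rcases lt_or_gt_of_ne ha with h1 | h1 <;> rcases lt_or_gt_of_ne hb with h2 | h2 <;>
        simp [h1, h2, sign_pos, sign_neg] at h <;> nlinarith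
    · rw [if_pos (by simpa using h), List.length_cons, ih', if_pos]
      rcases lt_or_gt_of_ne ha with h1 | h1 <;> rcases lt_or_gt_of_ne hb with h2 | h2 <;>
        simp [h1, h2, sign_pos, sign_neg] at h <;> nlinarith

lemma sv_eq (P : Polynomial ℝ) (hP : P ≠ 0) :
    signChanges ((List.range (P.natDegree + 1)).map P.coeff) = P.signVariations := by
  have h1 : P.coeffList = ((List.range (P.natDegree + 1)).map P.coeff).reverse := by
    rw [Polynomial.coeffList, Polynomial.withBotSucc_degree_eq_natDegree_add_one hP,
      List.map_reverse]
  have h2 : ∀ l : List ℝ, (l.map SignType.sign).filter (· ≠ 0) =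
      (l.filter (fun a => decide (a ≠ 0))).map SignType.sign := by
    intro l
    rw [List.filter_map]
    congr 1
    apply List.filter_congr
    intro x _
    simp [sign_eq_zero_iff]
  unfold Polynomial.signVariations signChanges
  simp only
  rw [h2, h1, List.filter_reverse]
  generalize hm : ((List.range (P.natDegree + 1)).map P.coeff).filter
    (fun a => decide (a ≠ 0)) = m
  have hm0 : ∀ x ∈ m.reverse, x ≠ 0 := by
    intro x hx
    rw [List.mem_reverse, ← hm, List.mem_filter] at hx
    simpa using hx.2
  rw [← sv_zip_reverse]
  generalize m.reverse = k at hm0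
  cases k with
  | nil => simp
  | cons a l =>
    rw [List.map_cons, List.destutter_cons', sv_destutter l a (hm0 a (by simp))
      (fun x hx => hm0 x (by simp [hx]))]
    simp

open Polynomial in
lemma sv_comp_coeff (P : ℝ[X]) (i : ℕ) : (P.comp (-X)).coeff i = (-1) ^ i * P.coeff i := by
  have h : (-X : ℝ[X]) = C (-1) * X := by simp
  rw [h, comp_C_mul_X_coeff, mul_comm]

open Polynomial in
lemma sv_comp_natDegree (P : ℝ[X]) : (P.comp (-X)).natDegree = P.natDegree := by
  rw [natDegree_comp]; simp

open Polynomial in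
lemma sv_comp_eraseLead (P : ℝ[X]) : (P.comp (-X)).eraseLead = P.eraseLead.comp (-X) := by
  ext i
  rw [eraseLead_coeff, sv_comp_coeff, sv_comp_coeff, eraseLead_coeff, sv_comp_natDegree]
  split_ifs <;> simp

open Polynomial in
lemma sv_comp_lead (P : ℝ[X]) :
    (P.comp (-X)).leadingCoeff = (-1) ^ P.natDegree * P.leadingCoeff := by
  rw [leadingCoeff, sv_comp_natDegree, sv_comp_coeff, leadingCoeff]

open Polynomial in
lemma sv_sum_le (r : ℕ) : ∀ (N : ℕ) (P : ℝ[X]), P.natDegree = N → P ≠ 0 → (∀ i < r, P.coeff i = 0) →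
    P.signVariations + (P.comp (-X)).signVariations + r ≤ P.natDegree := by
  intro N
  induction N using Nat.strong_induction_on with
  | _ N ih =>
  intro P hN hP hr
  have hP' : P.comp (-X) ≠ 0 := by
    intro h
    apply hP
    rw [← leadingCoeff_eq_zero] at h ⊢
    rw [sv_comp_lead] at h
    simpa using h
  have hrd : r ≤ P.natDegree := by
    by_contra h
    exact hP (leadingCoeff_eq_zero.1 (hr _ (not_le.1 h)))
  rw [signVariations_eq_eraseLead_add_ite hP, signVariations_eq_eraseLead_add_ite hP',
    sv_comp_eraseLead]
  by_cases hQ : P.eraseLead = 0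
  · have h1 : SignType.sign P.leadingCoeff ≠ 0 := by simpa using hP
    have h2 : SignType.sign (P.comp (-X)).leadingCoeff ≠ 0 := by
      simpa only [ne_eq, sign_eq_zero_iff, leadingCoeff_eq_zero] using hP'
    simp [hQ, h1, h2, -sign_eq_zero_iff]
    simpa [hP, hP'] using hrd
  · have hlt : P.eraseLead.natDegree < P.natDegree := by
      apply eraseLead_natDegree_lt
      by_contra h
      have := card_support_le_one_iff_monomial.1 (by omega : P.support.card ≤ 1)
      obtain ⟨n, x, rfl⟩ := this
      exact hQ (eraseLead_monomial n x)
    have := ih _ (hN ▸ hlt) P.eraseLead rfl hQ (fun i hi => by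
      rw [eraseLead_coeff]; split_ifs
      · rfl
      · exact hr i hi)
    by_cases hd : P.eraseLead.natDegree + 2 ≤ P.natDegree
    · split_ifs <;> omega
    · have hd' : P.natDegree = P.eraseLead.natDegree + 1 := by omega
      have hex : ¬ (SignType.sign P.leadingCoeff = -SignType.sign P.eraseLead.leadingCoeff ∧
          SignType.sign (P.comp (-X)).leadingCoeff =
            -SignType.sign (P.eraseLead.comp (-X)).leadingCoeff) := by
        rw [sv_comp_lead, sv_comp_lead, hd', sign_mul, sign_mul, pow_succ, sign_mul]
        rintro ⟨h1, h2⟩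
        rw [h1] at h2
        have h3 : SignType.sign P.eraseLead.leadingCoeff ≠ 0 := by
          simpa only [ne_eq, sign_eq_zero_iff, leadingCoeff_eq_zero] using hQ
        have h4 : SignType.sign ((-1 : ℝ) ^ P.eraseLead.natDegree) ≠ 0 := by simp
        have h5 : SignType.sign (-1 : ℝ) = -1 := by simp
        rw [h5] at h2
        revert h2 h3 h4
        generalize SignType.sign P.eraseLead.leadingCoeff = s
        generalize SignType.sign ((-1 : ℝ) ^ P.eraseLead.natDegree) = t
        revert s t
        decide
      split_ifs <;> first | omega | (exfalso; tauto)

lemma isGreatest_pos {n : ℕ} (e : (Fin n → ℂ) ≃ₗ[ℂ] (Fin n → ℂ)) (d : Fin n → ℝ)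
    (Q : (Fin n → ℂ) → ℝ) (hQ : ∀ x, Q x = ∑ i, d i * Complex.normSq (e x i)) :
    IsGreatest {k : ℕ | ∃ W : Submodule ℂ (Fin n → ℂ), Module.finrank ℂ W = k ∧
      ∀ x ∈ W, x ≠ 0 → 0 < Q x} (Finset.univ.filter fun i => 0 < d i).card := by
  classical
  constructor
  · let f : ({i // 0 < d i} → ℂ) →ₗ[ℂ] (Fin n → ℂ) :=
      e.symm.toLinearMap ∘ₗ Function.ExtendByZero.linearMap ℂ (Subtype.val : {i // 0 < d i} → Fin n)
    have hf : Function.Injective f :=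
      e.symm.injective.comp (Function.extend_injective Subtype.val_injective _)
    refine ⟨LinearMap.range f, ?_, ?_⟩
    · rw [LinearMap.finrank_range_of_inj hf, Module.finrank_fintype_fun_eq_card,
        Fintype.card_subtype]
    · rintro x ⟨y, rfl⟩ hx
      have hy : y ≠ 0 := by rintro rfl; simp at hx
      have he : e (f y) = Function.extend Subtype.val y 0 := by
        change e (e.symm _) = _
        rw [e.apply_symm_apply]; rfl
      rw [hQ, he]
      obtain ⟨i, hi⟩ := Function.ne_iff.1 hy
      apply Finset.sum_pos'
      · intro j _
        by_cases hj : 0 < d j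
        · exact mul_nonneg hj.le (Complex.normSq_nonneg _)
        · rw [Function.extend_apply']
          · simp
          · rintro ⟨a, rfl⟩; exact hj a.2
      · refine ⟨i, Finset.mem_univ _, mul_pos i.2 ?_⟩
        rw [Subtype.val_injective.extend_apply]
        exact Complex.normSq_pos.2 hi
  · rintro k ⟨W, rfl, hW⟩
    let g : W →ₗ[ℂ] ({i // 0 < d i} → ℂ) :=
      (LinearMap.funLeft ℂ ℂ (Subtype.val : {i // 0 < d i} → Fin n)) ∘ₗ e.toLinearMap ∘ₗ W.subtype
    have hg : Function.Injective g := by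
      rw [injective_iff_map_eq_zero]
      rintro ⟨x, hx⟩ h
      by_contra hne
      have hpos := hW x hx (by simpa using hne)
      rw [hQ] at hpos
      refine absurd hpos (not_lt.2 (Finset.sum_nonpos ?_))
      intro i _
      by_cases hi : 0 < d i
      · have : e x i = 0 := congrFun h ⟨i, hi⟩
        simp [this]
      · exact mul_nonpos_of_nonpos_of_nonneg (not_lt.1 hi) (Complex.normSq_nonneg _)
    have := LinearMap.finrank_le_finrank_of_injective hg
    rwa [Module.finrank_fintype_fun_eq_card, Fintype.card_subtype] at this

lemma herm_diag {n : ℕ} (C : Matrix (Fin n) (Fin n) ℂ) (hC : C.IsHermitian) :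
    ∃ e : (Fin n → ℂ) ≃ₗ[ℂ] (Fin n → ℂ), ∀ x, (star x ⬝ᵥ C.mulVec x).re =
      ∑ i, hC.eigenvalues i * Complex.normSq (e x i) := by
  set U : Matrix (Fin n) (Fin n) ℂ := (hC.eigenvectorUnitary : Matrix (Fin n) (Fin n) ℂ) with hU
  have h1 : star U * U = 1 := Unitary.coe_star_mul_self hC.eigenvectorUnitary
  have h2 : U * star U = 1 := Unitary.coe_mul_star_self hC.eigenvectorUnitary
  refine ⟨Matrix.toLin'OfInv h2 h1, fun x => ?_⟩
  have hs : C = U * diagonal (RCLike.ofReal ∘ hC.eigenvalues) * star U := by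
    conv_lhs => rw [hC.spectral_theorem, Unitary.conjStarAlgAut_apply]
  have he : Matrix.toLin'OfInv h2 h1 x = star U *ᵥ x := by
    rfl
  rw [he]
  have h3 : star x ⬝ᵥ C.mulVec x =
      star (star U *ᵥ x) ⬝ᵥ (diagonal (RCLike.ofReal ∘ hC.eigenvalues) *ᵥ (star U *ᵥ x)) := by
    conv_lhs => rw [hs]
    rw [star_mulVec, ← dotProduct_mulVec, mulVec_mulVec, mulVec_mulVec, star_eq_conjTranspose U,
      conjTranspose_conjTranspose, Matrix.mul_assoc]
  rw [h3]
  generalize star U *ᵥ x = y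
  simp only [dotProduct, mulVec_diagonal, Complex.re_sum]
  apply Finset.sum_congr rfl
  intro i _
  simp [Complex.normSq_apply]
  ring

theorem stmt_9 {n : ℕ} (C : Matrix (Fin n) (Fin n) ℂ) (hC : C.IsHermitian)
    (p q : ℕ)
    (hp : p = signChanges ((List.range (n + 1)).map fun i => (C.charpoly.coeff i).re))
    (hq : q = signChanges ((List.range (n + 1)).map fun i =>
      (-1 : ℝ) ^ i * (C.charpoly.coeff i).re)) :
    (∀ i : ℕ, (C.charpoly.coeff i).im = 0) ∧
    C.IsHermTypeOf p q ∧
    (∀ r : ℕ, (∀ i < r, C.charpoly.coeff i = 0) → C.charpoly.coeff r ≠ 0 →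
      p + q = n - r) := by
  classical
  set d := hC.eigenvalues with hd
  obtain ⟨P, hPdef⟩ : ∃ P : Polynomial ℝ, P = ∏ i, (Polynomial.X - Polynomial.C (d i)) := ⟨_, rfl⟩
  have hchar : C.charpoly = P.map (algebraMap ℝ ℂ) := by
    rw [hC.charpoly_eq, hPdef, Polynomial.map_prod]
    simp [hd]
  have hcoeff : ∀ i, C.charpoly.coeff i = (P.coeff i : ℂ) := by
    intro i; rw [hchar, Polynomial.coeff_map]; rfl
  have hmonic : P.Monic := by
    rw [hPdef]; exact Polynomial.monic_prod_of_monic _ _ fun i _ => Polynomial.monic_X_sub_C _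
  have hP0 := hmonic.ne_zero
  have hdeg : P.natDegree = n := by
    rw [hPdef, Polynomial.natDegree_prod_of_monic _ _ fun i _ => Polynomial.monic_X_sub_C _]
    simp
  have hroots : ∀ f : Fin n → ℝ,
      (∏ i, (Polynomial.X - Polynomial.C (f i))).roots = Finset.univ.val.map f := by
    intro f
    rw [Polynomial.roots_prod]
    · simp
    · simp [Finset.prod_ne_zero_iff, Polynomial.X_sub_C_ne_zero]
  have hcount : ∀ f : Fin n → ℝ, (Finset.univ.filter fun i => 0 < f i).card ≤
      (∏ i, (Polynomial.X - Polynomial.C (f i))).signVariations := by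
    intro f
    refine le_trans (le_of_eq ?_) (Polynomial.roots_countP_pos_le_signVariations _)
    rw [hroots, Multiset.countP_map]
    rfl
  have hcomp : P.comp (-Polynomial.X) =
      Polynomial.C ((-1) ^ n) * ∏ i, (Polynomial.X - Polynomial.C (-d i)) := by
    rw [hPdef, Polynomial.prod_comp]
    have : ((-1 : ℝ)) ^ n = ∏ _i : Fin n, (-1 : ℝ) := by simp
    rw [this, map_prod, ← Finset.prod_mul_distrib]
    apply Finset.prod_congr rfl
    intro i _
    simp
    ring
  have hpV : p = P.signVariations := by
    rw [hp, ← sv_eq P hP0, hdeg]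
    simp [hcoeff]
  have hcomp0 : P.comp (-Polynomial.X) ≠ 0 := by
    rw [Ne, ← Polynomial.leadingCoeff_eq_zero, sv_comp_lead]
    simpa using hP0
  have hqV : q = (P.comp (-Polynomial.X)).signVariations := by
    rw [hq, ← sv_eq _ hcomp0, sv_comp_natDegree, hdeg]
    simp only [hcoeff, Complex.ofReal_re]
    congr 1
    apply List.map_congr_left
    intro i _
    rw [sv_comp_coeff]
  have hple : (Finset.univ.filter fun i => 0 < d i).card ≤ p := by
    rw [hpV, hPdef]; exact hcount d
  have hqle : (Finset.univ.filter fun i => 0 < -d i).card ≤ q := by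
    rw [hqV, hcomp, Polynomial.signVariations_C_mul _ (by simp)]
    exact hcount fun i => -d i
  have hzero : P.natTrailingDegree = (Finset.univ.filter fun i => d i = 0).card := by
    rw [← Polynomial.rootMultiplicity_eq_natTrailingDegree', ← Polynomial.count_roots, hPdef,
      hroots, Multiset.count_map]
    simp only [eq_comm (a := (0 : ℝ))]
    rfl
  have htot : (Finset.univ.filter fun i => 0 < d i).card +
      (Finset.univ.filter fun i => 0 < -d i).card +
      (Finset.univ.filter fun i => d i = 0).card = n := by
    rw [Finset.card_filter, Finset.card_filter, Finset.card_filter, ← Finset.sum_add_distrib,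
      ← Finset.sum_add_distrib]
    rw [Finset.sum_congr rfl (g := fun _ => 1)]
    · simp
    · intro i _
      rcases lt_trichotomy (d i) 0 with h | h | h
      · simp [h, h.ne, h.le]
      · simp [h]
      · simp [h, h.ne', h.le]
  have hsum := sv_sum_le P.natTrailingDegree _ P rfl hP0
    (fun i hi => Polynomial.coeff_eq_zero_of_lt_natTrailingDegree hi)
  rw [← hpV, ← hqV, hdeg] at hsum
  have hpe : p = (Finset.univ.filter fun i => 0 < d i).card := by omega
  have hqe : q = (Finset.univ.filter fun i => 0 < -d i).card := by omega
  obtain ⟨e, he⟩ := herm_diag C hC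
  refine ⟨fun i => by rw [hcoeff]; simp, ⟨?_, ?_⟩, ?_⟩
  · rw [hpe]
    exact isGreatest_pos e d _ he
  · rw [hqe]
    have := isGreatest_pos e (fun i => -d i) (fun x => -(star x ⬝ᵥ C.mulVec x).re)
      (fun x => by rw [he]; simp [hd])
    simpa only [neg_pos] using this
  · intro r hr hr0
    have : P.natTrailingDegree = r := by
      apply le_antisymm
      · apply Polynomial.natTrailingDegree_le_of_ne_zero
        intro h; apply hr0; rw [hcoeff, h]; simp
      · apply Polynomial.le_natTrailingDegree hP0
        intro i hi
        have := hr i hi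
        rw [hcoeff] at this
        exact_mod_cast this
    omega
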